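/- Let a > 0, ε ∈ ℝ, m₀ a nonzero integer, Y : [−1, 1] → ℂ twice continuously differentiable, and let u be the separated field of zonal wavenumber m₀ with profile Y; write u¹ = Re u, u² = Im u. Let Z : [−1, 1] → ℂ be continuously differentiable, let v be the separated field of zonal wavenumber 2m₀ with profile Z, and write w¹ = Re v, w² = Im v. Then G(u¹, u¹, w¹) = G(u¹, u², w²) and G(u¹, u¹, w²) = −G(u¹, u², w¹); equivalently, for the complex field v one has G(u¹, u¹, v) = i G(u¹, u², v), where G(u, v, w) = −ε ∫_Ω ((u·∇)v)·conj(w) dx dy. -/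

import Mathlib

/-!
Write `ū` for the complex conjugate of `u`. Since `u¹ = ū + i u²`, linearity in the second slot
gives `G(u¹, u¹, v) = G(u¹, ū, v) + i G(u¹, u², v)`, and since `u¹ = (u + ū) / 2` the extra term is
a combination of `G(u, ū, v)` and `G(ū, ū, v)`. If `u` and `v` have wavenumbers `p` and `r`, these
integrate modes of wavenumbers `-r` and `-2p - r` over a full period, so they vanish. As `G` is real
on real fields, the two real identities are the real and imaginary parts of this complex one.
-/

open Complex

/-- Partial derivative in `x`. -/
noncomputable def pdx (f : ℝ → ℝ → ℂ) : ℝ → ℝ → ℂ :=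
  fun x y => deriv (fun t => f t y) x

/-- Partial derivative in `y`. -/
noncomputable def pdy (f : ℝ → ℝ → ℂ) : ℝ → ℝ → ℂ :=
  fun x y => deriv (fun t => f x t) y

/-- First component of a complex vector field. -/
def c1 (u : ℝ → ℝ → ℂ × ℂ) : ℝ → ℝ → ℂ := fun x y => (u x y).1

/-- Second component of a complex vector field. -/
def c2 (u : ℝ → ℝ → ℂ × ℂ) : ℝ → ℝ → ℂ := fun x y => (u x y).2

/-- The trilinear form `G(u,v,w) = -ε ∫_Ω ((u·∇)v)·conj(w) dx dy` over the channel
`Ω = (0, 2/a) × (-1, 1)`. -/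
noncomputable def trilinG (a ε : ℝ) (u v w : ℝ → ℝ → ℂ × ℂ) : ℂ :=
  -(ε : ℂ) * ∫ x in (0 : ℝ)..(2 / a), ∫ y in (-1 : ℝ)..1,
    ((c1 u x y * pdx (c1 v) x y + c2 u x y * pdy (c1 v) x y) * (starRingEnd ℂ) (c1 w x y)
      + (c1 u x y * pdx (c2 v) x y + c2 u x y * pdy (c2 v) x y) * (starRingEnd ℂ) (c2 w x y))

/-- The separated field of zonal wavenumber `p` with profile `Y`:
`u = (∂ψ/∂y, -∂ψ/∂x)` where `ψ(x,y) = e^{i a p π x} Y(y)`. -/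
noncomputable def sepField (a : ℝ) (p : ℤ) (Y : ℝ → ℂ) : ℝ → ℝ → ℂ × ℂ :=
  fun x y =>
    (pdy (fun (x y : ℝ) =>
        Complex.exp (Complex.I * ((a * p * Real.pi : ℝ) : ℂ) * ((x : ℝ) : ℂ)) * Y y) x y,
     -pdx (fun (x y : ℝ) =>
        Complex.exp (Complex.I * ((a * p * Real.pi : ℝ) : ℂ) * ((x : ℝ) : ℂ)) * Y y) x y)

/-- Real part of a complex vector field, viewed again as a complex vector field. -/
noncomputable def reField (u : ℝ → ℝ → ℂ × ℂ) : ℝ → ℝ → ℂ × ℂ :=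
  fun x y => (((u x y).1.re : ℂ), ((u x y).2.re : ℂ))

/-- Imaginary part of a complex vector field, viewed again as a complex vector field. -/
noncomputable def imField (u : ℝ → ℝ → ℂ × ℂ) : ℝ → ℝ → ℂ × ℂ :=
  fun x y => (((u x y).1.im : ℂ), ((u x y).2.im : ℂ))

open Function (uncurry)
open scoped ComplexConjugate ContDiff

section PartialDerivatives

variable {f g : ℝ → ℝ → ℂ}

lemma pdx_const_smul (c : ℂ) (f : ℝ → ℝ → ℂ) : pdx (c • f) = c • pdx f := by
  ext x y
  exact deriv_const_mul_field c

lemma pdy_const_smul (c : ℂ) (f : ℝ → ℝ → ℂ) : pdy (c • f) = c • pdy f := by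
  ext x y
  exact deriv_const_mul_field c

lemma pdx_star (f : ℝ → ℝ → ℂ) : pdx (star f) = star (pdx f) := by
  ext x y
  exact deriv.star

lemma pdy_star (f : ℝ → ℝ → ℂ) : pdy (star f) = star (pdy f) := by
  ext x y
  exact deriv.star

lemma pdx_eq_fderiv (hf : Differentiable ℝ (uncurry f)) (x y : ℝ) :
    pdx f x y = fderiv ℝ (uncurry f) (x, y) (1, 0) :=
  ((hf (x, y)).hasFDerivAt.comp_hasDerivAt (f := fun t => (t, y)) x
    ((hasDerivAt_id x).prodMk (hasDerivAt_const x y))).deriv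

lemma pdy_eq_fderiv (hf : Differentiable ℝ (uncurry f)) (x y : ℝ) :
    pdy f x y = fderiv ℝ (uncurry f) (x, y) (0, 1) :=
  ((hf (x, y)).hasFDerivAt.comp_hasDerivAt (f := fun t => (x, t)) y
    ((hasDerivAt_const y x).prodMk (hasDerivAt_id y))).deriv

lemma pdx_add (hf : Differentiable ℝ (uncurry f)) (hg : Differentiable ℝ (uncurry g)) :
    pdx (f + g) = pdx f + pdx g := by
  ext x y
  have hfg : Differentiable ℝ (uncurry (f + g)) := hf.add hg
  simp only [Pi.add_apply, pdx_eq_fderiv hf, pdx_eq_fderiv hg, pdx_eq_fderiv hfg]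
  exact DFunLike.congr_fun (fderiv_add (hf (x, y)) (hg (x, y))) (1, 0)

lemma pdy_add (hf : Differentiable ℝ (uncurry f)) (hg : Differentiable ℝ (uncurry g)) :
    pdy (f + g) = pdy f + pdy g := by
  ext x y
  have hfg : Differentiable ℝ (uncurry (f + g)) := hf.add hg
  simp only [Pi.add_apply, pdy_eq_fderiv hf, pdy_eq_fderiv hg, pdy_eq_fderiv hfg]
  exact DFunLike.congr_fun (fderiv_add (hf (x, y)) (hg (x, y))) (0, 1)

lemma continuous_pdx (hf : ContDiff ℝ 1 (uncurry f)) : Continuous (uncurry (pdx f)) := by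
  have h : uncurry (pdx f) = fun z => fderiv ℝ (uncurry f) z (1, 0) :=
    funext fun z => pdx_eq_fderiv (hf.differentiable one_ne_zero) z.1 z.2
  rw [h]
  exact (hf.continuous_fderiv one_ne_zero).clm_apply continuous_const

lemma continuous_pdy (hf : ContDiff ℝ 1 (uncurry f)) : Continuous (uncurry (pdy f)) := by
  have h : uncurry (pdy f) = fun z => fderiv ℝ (uncurry f) z (0, 1) :=
    funext fun z => pdy_eq_fderiv (hf.differentiable one_ne_zero) z.1 z.2
  rw [h]
  exact (hf.continuous_fderiv one_ne_zero).clm_apply continuous_const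

end PartialDerivatives

section Advection

variable {u u' v v' : ℝ → ℝ → ℂ × ℂ}

/-- The advection term `(u·∇)v`, the first factor of the integrand of `trilinG`. -/
noncomputable def advection (u v : ℝ → ℝ → ℂ × ℂ) : ℝ → ℝ → ℂ × ℂ := fun x y =>
  (c1 u x y * pdx (c1 v) x y + c2 u x y * pdy (c1 v) x y,
    c1 u x y * pdx (c2 v) x y + c2 u x y * pdy (c2 v) x y)

lemma advection_add_left (u u' v : ℝ → ℝ → ℂ × ℂ) :
    advection (u + u') v = advection u v + advection u' v := by
  ext x y <;> simp only [advection, c1, c2, Pi.add_apply, Prod.fst_add, Prod.snd_add] <;> ring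

lemma advection_smul_left (c : ℂ) (u v : ℝ → ℝ → ℂ × ℂ) :
    advection (c • u) v = c • advection u v := by
  ext x y <;> simp only [advection, c1, c2, Pi.smul_apply, Prod.smul_fst, Prod.smul_snd,
    smul_eq_mul] <;> ring

lemma advection_add_right (hv : Differentiable ℝ (uncurry v))
    (hv' : Differentiable ℝ (uncurry v')) :
    advection u (v + v') = advection u v + advection u v' := by
  have h₁ : c1 (v + v') = c1 v + c1 v' := rfl
  have h₂ : c2 (v + v') = c2 v + c2 v' := rfl
  ext x y <;> simp only [advection, h₁, h₂,
    pdx_add (f := c1 v) (g := c1 v') hv.fst hv'.fst,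
    pdy_add (f := c1 v) (g := c1 v') hv.fst hv'.fst,
    pdx_add (f := c2 v) (g := c2 v') hv.snd hv'.snd,
    pdy_add (f := c2 v) (g := c2 v') hv.snd hv'.snd,
    Pi.add_apply, Prod.fst_add, Prod.snd_add] <;> ring

lemma advection_smul_right (c : ℂ) (u v : ℝ → ℝ → ℂ × ℂ) :
    advection u (c • v) = c • advection u v := by
  have h₁ : c1 (c • v) = c • c1 v := rfl
  have h₂ : c2 (c • v) = c • c2 v := rfl
  ext x y <;> simp only [advection, h₁, h₂, pdx_const_smul, pdy_const_smul, Pi.smul_apply,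
    Prod.smul_fst, Prod.smul_snd, smul_eq_mul] <;> ring

lemma advection_star (u v : ℝ → ℝ → ℂ × ℂ) :
    advection (star u) (star v) = star (advection u v) := by
  have h₁ (w : ℝ → ℝ → ℂ × ℂ) : c1 (star w) = star (c1 w) := rfl
  have h₂ (w : ℝ → ℝ → ℂ × ℂ) : c2 (star w) = star (c2 w) := rfl
  ext x y <;> simp only [advection, h₁, h₂, pdx_star, pdy_star, Pi.star_apply, Prod.fst_star,
    Prod.snd_star, star_add, star_mul']

lemma continuous_advection (hu : Continuous (uncurry u)) (hv : ContDiff ℝ 1 (uncurry v)) :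
    Continuous (uncurry (advection u v)) :=
  have hv₁ : ContDiff ℝ 1 (uncurry (c1 v)) := hv.fst
  have hv₂ : ContDiff ℝ 1 (uncurry (c2 v)) := hv.snd
  ((hu.fst.mul (continuous_pdx hv₁)).add (hu.snd.mul (continuous_pdy hv₁))).prodMk
    ((hu.fst.mul (continuous_pdx hv₂)).add (hu.snd.mul (continuous_pdy hv₂)))

end Advection

section ChannelInner

lemma intervalIntegral_intervalIntegral_add {E : Type*} [NormedAddCommGroup E] [NormedSpace ℝ E]
    {f g : ℝ → ℝ → E} (hf : Continuous (uncurry f)) (hg : Continuous (uncurry g))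
    (s t s' t' : ℝ) :
    ∫ x in s..t, ∫ y in s'..t', (f x y + g x y) =
      (∫ x in s..t, ∫ y in s'..t', f x y) + ∫ x in s..t, ∫ y in s'..t', g x y := by
  have inner (x : ℝ) : ∫ y in s'..t', (f x y + g x y) =
      (∫ y in s'..t', f x y) + ∫ y in s'..t', g x y :=
    intervalIntegral.integral_add (hf.uncurry_left x |>.intervalIntegrable _ _)
      (hg.uncurry_left x |>.intervalIntegrable _ _)
  simp only [inner]
  exact intervalIntegral.integral_add
    (intervalIntegral.continuous_parametric_intervalIntegral_of_continuous' hf _ _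
      |>.intervalIntegrable _ _)
    (intervalIntegral.continuous_parametric_intervalIntegral_of_continuous' hg _ _
      |>.intervalIntegrable _ _)

/-- The `L²` inner product `∫_Ω F · conj w` of vector fields on the channel `(0, 2/a) × (-1, 1)`,
linear in the first argument. -/
noncomputable def channelInner (a : ℝ) (F w : ℝ → ℝ → ℂ × ℂ) : ℂ :=
  ∫ x in (0 : ℝ)..(2 / a), ∫ y in (-1 : ℝ)..1, (c1 F x y * conj (c1 w x y) +
    c2 F x y * conj (c2 w x y))

variable {a : ℝ} {F F' w w' : ℝ → ℝ → ℂ × ℂ}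

lemma channelInner_add_left (hF : Continuous (uncurry F)) (hF' : Continuous (uncurry F'))
    (hw : Continuous (uncurry w)) :
    channelInner a (F + F') w = channelInner a F w + channelInner a F' w := by
  have integrand_continuous {H : ℝ → ℝ → ℂ × ℂ} (hH : Continuous (uncurry H)) :
      Continuous (uncurry fun x y => c1 H x y * conj (c1 w x y) + c2 H x y * conj (c2 w x y)) :=
    (hH.fst.mul (continuous_conj.comp hw.fst)).add (hH.snd.mul (continuous_conj.comp hw.snd))
  unfold channelInner
  rw [← intervalIntegral_intervalIntegral_add (integrand_continuous hF) (integrand_continuous hF')]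
  congr! 4
  simp only [c1, c2, Pi.add_apply, Prod.fst_add, Prod.snd_add]
  ring

lemma channelInner_smul_left (c : ℂ) (F w : ℝ → ℝ → ℂ × ℂ) :
    channelInner a (c • F) w = c * channelInner a F w := by
  simp only [channelInner, ← intervalIntegral.integral_const_mul, c1, c2, Pi.smul_apply,
    Prod.smul_fst, Prod.smul_snd, smul_eq_mul, mul_add, mul_assoc]

lemma conj_channelInner (F w : ℝ → ℝ → ℂ × ℂ) :
    conj (channelInner a F w) = channelInner a w F := by
  simp only [channelInner, ← intervalIntegral.intervalIntegral_conj, map_add, map_mul, conj_conj,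
    mul_comm]

lemma channelInner_star_star (F w : ℝ → ℝ → ℂ × ℂ) :
    channelInner a (star F) (star w) = channelInner a w F := by
  simp only [channelInner, c1, c2, Pi.star_apply, Prod.fst_star, Prod.snd_star, star_def,
    conj_conj, mul_comm]

lemma channelInner_add_right (hF : Continuous (uncurry F)) (hw : Continuous (uncurry w))
    (hw' : Continuous (uncurry w')) :
    channelInner a F (w + w') = channelInner a F w + channelInner a F w' := by
  rw [← conj_channelInner, channelInner_add_left hw hw' hF, map_add, conj_channelInner,
    conj_channelInner]

lemma channelInner_smul_right (c : ℂ) (F w : ℝ → ℝ → ℂ × ℂ) :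
    channelInner a F (c • w) = conj c * channelInner a F w := by
  rw [← conj_channelInner, channelInner_smul_left, map_mul, conj_channelInner]

end ChannelInner

section TrilinearForm

variable {a ε : ℝ} {u u' v v' w w' : ℝ → ℝ → ℂ × ℂ}

lemma trilinG_eq_channelInner (a ε : ℝ) (u v w : ℝ → ℝ → ℂ × ℂ) :
    trilinG a ε u v w = -(ε : ℂ) * channelInner a (advection u v) w := rfl

lemma trilinG_add_left (hu : Continuous (uncurry u)) (hu' : Continuous (uncurry u'))
    (hv : ContDiff ℝ 1 (uncurry v)) (hw : Continuous (uncurry w)) :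
    trilinG a ε (u + u') v w = trilinG a ε u v w + trilinG a ε u' v w := by
  simp only [trilinG_eq_channelInner, advection_add_left, mul_add,
    channelInner_add_left (continuous_advection hu hv) (continuous_advection hu' hv) hw]

lemma trilinG_smul_left (c : ℂ) (u v w : ℝ → ℝ → ℂ × ℂ) :
    trilinG a ε (c • u) v w = c * trilinG a ε u v w := by
  simp only [trilinG_eq_channelInner, advection_smul_left, channelInner_smul_left, mul_left_comm]

lemma trilinG_add_middle (hu : Continuous (uncurry u)) (hv : ContDiff ℝ 1 (uncurry v))
    (hv' : ContDiff ℝ 1 (uncurry v')) (hw : Continuous (uncurry w)) :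
    trilinG a ε u (v + v') w = trilinG a ε u v w + trilinG a ε u v' w := by
  simp only [trilinG_eq_channelInner, mul_add,
    advection_add_right (hv.differentiable one_ne_zero) (hv'.differentiable one_ne_zero),
    channelInner_add_left (continuous_advection hu hv) (continuous_advection hu hv') hw]

lemma trilinG_smul_middle (c : ℂ) (u v w : ℝ → ℝ → ℂ × ℂ) :
    trilinG a ε u (c • v) w = c * trilinG a ε u v w := by
  simp only [trilinG_eq_channelInner, advection_smul_right, channelInner_smul_left, mul_left_comm]

lemma trilinG_add_right (hu : Continuous (uncurry u)) (hv : ContDiff ℝ 1 (uncurry v))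
    (hw : Continuous (uncurry w)) (hw' : Continuous (uncurry w')) :
    trilinG a ε u v (w + w') = trilinG a ε u v w + trilinG a ε u v w' := by
  simp only [trilinG_eq_channelInner, mul_add,
    channelInner_add_right (continuous_advection hu hv) hw hw']

lemma trilinG_smul_right (c : ℂ) (u v w : ℝ → ℝ → ℂ × ℂ) :
    trilinG a ε u v (c • w) = conj c * trilinG a ε u v w := by
  simp only [trilinG_eq_channelInner, channelInner_smul_right, mul_left_comm]

lemma conj_trilinG (a ε : ℝ) (u v w : ℝ → ℝ → ℂ × ℂ) :
    conj (trilinG a ε u v w) = trilinG a ε (star u) (star v) (star w) := by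
  simp only [trilinG_eq_channelInner, advection_star, channelInner_star_star, map_mul, map_neg,
    conj_ofReal, conj_channelInner]

lemma im_trilinG_eq_zero (hu : IsSelfAdjoint u) (hv : IsSelfAdjoint v) (hw : IsSelfAdjoint w) :
    (trilinG a ε u v w).im = 0 := by
  rw [← conj_eq_iff_im, conj_trilinG, hu.star_eq, hv.star_eq, hw.star_eq]

end TrilinearForm

section RealAndImaginaryParts

variable {a ε : ℝ} {u v w : ℝ → ℝ → ℂ × ℂ}

lemma isSelfAdjoint_reField (u : ℝ → ℝ → ℂ × ℂ) : IsSelfAdjoint (reField u) := by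
  ext x y <;> exact conj_ofReal _

lemma isSelfAdjoint_imField (u : ℝ → ℝ → ℂ × ℂ) : IsSelfAdjoint (imField u) := by
  ext x y <;> exact conj_ofReal _

lemma contDiff_reField {n : ℕ∞ω} (hu : ContDiff ℝ n (uncurry u)) :
    ContDiff ℝ n (uncurry (reField u)) :=
  let realPart := ofRealCLM.comp reCLM
  (realPart.contDiff.comp hu.fst).prodMk (realPart.contDiff.comp hu.snd)

lemma contDiff_imField {n : ℕ∞ω} (hu : ContDiff ℝ n (uncurry u)) :
    ContDiff ℝ n (uncurry (imField u)) :=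
  let imagPart := ofRealCLM.comp imCLM
  (imagPart.contDiff.comp hu.fst).prodMk (imagPart.contDiff.comp hu.snd)

lemma contDiff_star {n : ℕ∞ω} (hu : ContDiff ℝ n (uncurry u)) :
    ContDiff ℝ n (uncurry (star u)) :=
  (conjCLE.contDiff.comp hu.fst).prodMk (conjCLE.contDiff.comp hu.snd)

lemma reField_add_I_smul_imField (u : ℝ → ℝ → ℂ × ℂ) : reField u + I • imField u = u := by
  ext x y <;> simp [reField, imField, mul_comm I, re_add_im]

lemma star_add_I_smul_imField (u : ℝ → ℝ → ℂ × ℂ) : star u + I • imField u = reField u := by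
  ext x y <;> apply Complex.ext <;> simp [reField, imField]

lemma reField_eq_half_smul (u : ℝ → ℝ → ℂ × ℂ) : reField u = (1 / 2 : ℂ) • (u + star u) := by
  ext x y <;> simp [reField, re_eq_add_conj] <;> ring

lemma trilinG_eq_reField_sub_imField (hu : Continuous (uncurry u))
    (hv : ContDiff ℝ 1 (uncurry v)) (hw : Continuous (uncurry w)) :
    trilinG a ε u v w = trilinG a ε u v (reField w) - I * trilinG a ε u v (imField w) := by
  have hre : Continuous (uncurry (reField w)) := (contDiff_reField (contDiff_zero.2 hw)).continuous
  have him : Continuous (uncurry (I • imField w)) :=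
    (contDiff_imField (contDiff_zero.2 hw)).continuous.const_smul I
  conv_lhs => rw [← reField_add_I_smul_imField w]
  rw [trilinG_add_right hu hv hre him, trilinG_smul_right, conj_I, neg_mul,
    sub_eq_add_neg]

end RealAndImaginaryParts

section ZonalFields

/-- The zonal Fourier mode `e^{i a p π x}`; it has period `2/a`, the length of the channel. -/
noncomputable def zonalMode (a : ℝ) (p : ℤ) (x : ℝ) : ℂ :=
  exp (I * ((a * p * Real.pi : ℝ) : ℂ) * (x : ℂ))

lemma zonalMode_add (a : ℝ) (p q : ℤ) (x : ℝ) :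
    zonalMode a (p + q) x = zonalMode a p x * zonalMode a q x := by
  simp only [zonalMode, ← exp_add]
  push_cast
  ring_nf

lemma conj_zonalMode (a : ℝ) (p : ℤ) (x : ℝ) :
    conj (zonalMode a p x) = zonalMode a (-p) x := by
  simp [zonalMode, ← exp_conj]

lemma contDiff_zonalMode (a : ℝ) (p : ℤ) {n : ℕ∞ω} : ContDiff ℝ n (zonalMode a p) :=
  (contDiff_const.mul ofRealCLM.contDiff).cexp

lemma deriv_zonalMode (a : ℝ) (p : ℤ) (x : ℝ) :
    deriv (zonalMode a p) x = zonalMode a p x * (I * ((a * p * Real.pi : ℝ) : ℂ)) := by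
  have hasDerivAt_phase : HasDerivAt (fun t : ℝ => I * ((a * p * Real.pi : ℝ) : ℂ) * (t : ℂ))
      (I * ((a * p * Real.pi : ℝ) : ℂ)) x := by
    simpa only [id_eq, ofReal_one, mul_one] using
      (hasDerivAt_id x).ofReal_comp.const_mul (I * ((a * p * Real.pi : ℝ) : ℂ))
  exact hasDerivAt_phase.cexp.deriv

lemma integral_zonalMode {a : ℝ} (ha : a ≠ 0) {p : ℤ} (hp : p ≠ 0) :
    ∫ x in (0 : ℝ)..(2 / a), zonalMode a p x = 0 := by
  have frequency_ne_zero : I * ((a * p * Real.pi : ℝ) : ℂ) ≠ 0 := by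
    simp [ha, hp, Real.pi_ne_zero]
  have full_period : I * ((a * p * Real.pi : ℝ) : ℂ) * ((2 / a : ℝ) : ℂ) =
      p * (2 * Real.pi * I) := by
    have : (a : ℂ) ≠ 0 := ofReal_ne_zero.2 ha
    push_cast
    field_simp
  simp only [zonalMode]
  rw [integral_exp_mul_complex frequency_ne_zero, full_period, exp_int_mul_two_pi_mul_I]
  simp

/-- The field `u` has zonal wavenumber `p`: it is the mode `e^{i a p π x}` times a profile
depending on `y` only. Unlike `sepField`, no stream function is required. -/
def IsZonal (a : ℝ) (p : ℤ) (u : ℝ → ℝ → ℂ × ℂ) : Prop :=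
  ∃ U : ℝ → ℂ × ℂ, u = fun x y => zonalMode a p x • U y

variable {a : ℝ} {p q r : ℤ} {u v w : ℝ → ℝ → ℂ × ℂ}

lemma IsZonal.star (hu : IsZonal a p u) : IsZonal a (-p) (star u) := by
  obtain ⟨U, rfl⟩ := hu
  refine ⟨fun y => Star.star (U y), ?_⟩
  ext x y <;> simp [conj_zonalMode]

lemma IsZonal.advection (hu : IsZonal a p u) (hv : IsZonal a q v) :
    IsZonal a (p + q) (advection u v) := by
  obtain ⟨U, rfl⟩ := hu
  obtain ⟨V, rfl⟩ := hv
  refine ⟨fun y =>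
    ((U y).1 * (I * ((a * q * Real.pi : ℝ) : ℂ)) * (V y).1 + (U y).2 * deriv (fun t => (V t).1) y,
      (U y).1 * (I * ((a * q * Real.pi : ℝ) : ℂ)) * (V y).2 +
        (U y).2 * deriv (fun t => (V t).2) y), ?_⟩
  ext x y <;> simp only [_root_.advection, c1, c2, pdx, pdy, Prod.smul_fst, Prod.smul_snd,
    smul_eq_mul, deriv_mul_const_field, deriv_const_mul_field, deriv_zonalMode, zonalMode_add] <;>
    ring

lemma IsZonal.channelInner_eq_zero (ha : a ≠ 0) (hu : IsZonal a p u) (hw : IsZonal a q w)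
    (hpq : p ≠ q) : channelInner a u w = 0 := by
  obtain ⟨U, rfl⟩ := hu
  obtain ⟨W, rfl⟩ := hw
  have integrand_eq (x y : ℝ) :
      zonalMode a p x * (U y).1 * conj (zonalMode a q x * (W y).1) +
        zonalMode a p x * (U y).2 * conj (zonalMode a q x * (W y).2) =
      zonalMode a (p - q) x * ((U y).1 * conj (W y).1 + (U y).2 * conj (W y).2) := by
    rw [sub_eq_add_neg, zonalMode_add, ← conj_zonalMode, map_mul, map_mul]
    ring
  simp only [channelInner, c1, c2, Prod.smul_fst, Prod.smul_snd, smul_eq_mul, integrand_eq,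
    intervalIntegral.integral_const_mul, intervalIntegral.integral_mul_const,
    integral_zonalMode ha (sub_ne_zero.2 hpq), zero_mul]

lemma trilinG_eq_zero_of_isZonal (ha : a ≠ 0) (ε : ℝ) (hu : IsZonal a p u) (hv : IsZonal a q v)
    (hw : IsZonal a r w) (h : p + q ≠ r) : trilinG a ε u v w = 0 := by
  rw [trilinG_eq_channelInner, (hu.advection hv).channelInner_eq_zero ha hw h, mul_zero]

lemma trilinG_reField_star_eq_zero (ha : a ≠ 0) (ε : ℝ) (hu : IsZonal a p u)
    (hu₁ : ContDiff ℝ 1 (uncurry u)) (hv : IsZonal a r v) (hv₀ : Continuous (uncurry v))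
    (hr : r ≠ 0) (hpr : r ≠ -(2 * p)) : trilinG a ε (reField u) (star u) v = 0 := by
  have hu_star : ContDiff ℝ 1 (uncurry (star u)) := contDiff_star hu₁
  rw [reField_eq_half_smul, trilinG_smul_left,
    trilinG_add_left hu₁.continuous hu_star.continuous hu_star hv₀,
    trilinG_eq_zero_of_isZonal ha ε hu hu.star hv (by omega),
    trilinG_eq_zero_of_isZonal ha ε hu.star hu.star hv (by omega), add_zero, mul_zero]

lemma trilinG_reField_reField_eq_I_mul (ha : a ≠ 0) (ε : ℝ) (hu : IsZonal a p u)
    (hu₁ : ContDiff ℝ 1 (uncurry u)) (hv : IsZonal a r v) (hv₀ : Continuous (uncurry v))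
    (hr : r ≠ 0) (hpr : r ≠ -(2 * p)) :
    trilinG a ε (reField u) (reField u) v = I * trilinG a ε (reField u) (imField u) v :=
  have him : ContDiff ℝ 1 (uncurry (I • imField u)) := (contDiff_imField hu₁).const_smul I
  calc trilinG a ε (reField u) (reField u) v
    _ = trilinG a ε (reField u) (star u + I • imField u) v := by rw [star_add_I_smul_imField]
    _ = trilinG a ε (reField u) (star u) v + I * trilinG a ε (reField u) (imField u) v := by
      rw [trilinG_add_middle (contDiff_reField hu₁).continuous (contDiff_star hu₁) him hv₀,
        trilinG_smul_middle]
    _ = I * trilinG a ε (reField u) (imField u) v := by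
      rw [trilinG_reField_star_eq_zero ha ε hu hu₁ hv hv₀ hr hpr, zero_add]

end ZonalFields

section SeparatedFields

lemma sepField_eq (a : ℝ) (p : ℤ) (Y : ℝ → ℂ) :
    sepField a p Y = fun x y =>
      zonalMode a p x • (deriv Y y, -(I * ((a * p * Real.pi : ℝ) : ℂ)) * Y y) := by
  ext x y
  · exact deriv_const_mul_field (zonalMode a p x)
  · have hx : deriv (fun t => zonalMode a p t * Y y) x =
        zonalMode a p x * (I * ((a * p * Real.pi : ℝ) : ℂ)) * Y y := by
      rw [deriv_mul_const_field, deriv_zonalMode]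
    refine (congrArg Neg.neg hx).trans ?_
    simp only [Prod.smul_snd, smul_eq_mul]
    ring

lemma isZonal_sepField (a : ℝ) (p : ℤ) (Y : ℝ → ℂ) : IsZonal a p (sepField a p Y) :=
  ⟨_, sepField_eq a p Y⟩

lemma contDiff_sepField {n : ℕ∞ω} (a : ℝ) (p : ℤ) {Y : ℝ → ℂ} (hY : ContDiff ℝ (n + 1) Y) :
    ContDiff ℝ n (uncurry (sepField a p Y)) := by
  have hY' : ContDiff ℝ n (deriv Y) := (contDiff_succ_iff_deriv.1 hY).2.2
  rw [sepField_eq]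
  exact ((contDiff_zonalMode a p).comp contDiff_fst).smul
    ((hY'.comp contDiff_snd).prodMk
      (contDiff_const.mul ((hY.of_le le_self_add).comp contDiff_snd)))

lemma continuous_sepField (a : ℝ) (p : ℤ) {Y : ℝ → ℂ} (hY : ContDiff ℝ 1 Y) :
    Continuous (uncurry (sepField a p Y)) :=
  contDiff_zero.1 (contDiff_sepField a p (by rwa [zero_add]))

end SeparatedFields

lemma eq_and_eq_neg_of_sub_I_mul_eq {z₁ z₂ w₁ w₂ : ℂ} (hz₁ : z₁.im = 0) (hz₂ : z₂.im = 0)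
    (hw₁ : w₁.im = 0) (hw₂ : w₂.im = 0) (h : z₁ - I * z₂ = I * (w₁ - I * w₂)) :
    z₁ = w₂ ∧ z₂ = -w₁ := by
  have hre : z₁.re = w₂.re := by simpa [hz₂, hw₁] using congrArg re h
  have him : -z₂.re = w₁.re := by simpa [hz₁, hw₂] using congrArg im h
  exact ⟨Complex.ext hre (hz₁.trans hw₂.symm),
    Complex.ext (by rw [neg_re, ← him, neg_neg]) (by rw [neg_im, hz₂, hw₁, neg_zero])⟩

theorem double_wavenumber_interaction_identities_general {a : ℝ} (ha : a ≠ 0) (ε : ℝ) {p r : ℤ}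
    {u v : ℝ → ℝ → ℂ × ℂ} (hu : IsZonal a p u) (hu₁ : ContDiff ℝ 1 (uncurry u))
    (hv : IsZonal a r v) (hv₀ : Continuous (uncurry v)) (hr : r ≠ 0) (hpr : r ≠ -(2 * p)) :
    trilinG a ε (reField u) (reField u) (reField v) =
      trilinG a ε (reField u) (imField u) (imField v) ∧
    trilinG a ε (reField u) (reField u) (imField v) =
      -trilinG a ε (reField u) (imField u) (reField v) ∧
    trilinG a ε (reField u) (reField u) v = I * trilinG a ε (reField u) (imField u) v := by
  have complex_identity := trilinG_reField_reField_eq_I_mul ha ε hu hu₁ hv hv₀ hr hpr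
  have hre : ContDiff ℝ 1 (uncurry (reField u)) := contDiff_reField hu₁
  have him : ContDiff ℝ 1 (uncurry (imField u)) := contDiff_imField hu₁
  have im_reField {w : ℝ → ℝ → ℂ × ℂ} (hw : IsSelfAdjoint w) :
      (trilinG a ε (reField u) (reField u) w).im = 0 :=
    im_trilinG_eq_zero (isSelfAdjoint_reField u) (isSelfAdjoint_reField u) hw
  have im_imField {w : ℝ → ℝ → ℂ × ℂ} (hw : IsSelfAdjoint w) :
      (trilinG a ε (reField u) (imField u) w).im = 0 :=
    im_trilinG_eq_zero (isSelfAdjoint_reField u) (isSelfAdjoint_imField u) hw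
  have split_identity := complex_identity
  rw [trilinG_eq_reField_sub_imField hre.continuous hre hv₀,
    trilinG_eq_reField_sub_imField hre.continuous him hv₀] at split_identity
  obtain ⟨h₁, h₂⟩ := eq_and_eq_neg_of_sub_I_mul_eq
    (im_reField (isSelfAdjoint_reField v)) (im_reField (isSelfAdjoint_imField v))
    (im_imField (isSelfAdjoint_reField v)) (im_imField (isSelfAdjoint_imField v)) split_identity
  exact ⟨h₁, h₂, complex_identity⟩

/-- Further interaction identities between the real/imaginary parts `u¹, u²` of a separated
field of nonzero zonal wavenumber `m₀` and the real/imaginary parts `w¹, w²` of a separated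
field `v` of wavenumber `2m₀`: `G(u¹,u¹,w¹) = G(u¹,u²,w²)`, `G(u¹,u¹,w²) = -G(u¹,u²,w¹)`;
equivalently, for the complex field `v`, `G(u¹,u¹,v) = i G(u¹,u²,v)`. -/
theorem double_wavenumber_interaction_identities (a ε : ℝ) (ha : 0 < a)
    (m₀ : ℤ) (hm₀ : m₀ ≠ 0)
    (Y : ℝ → ℂ) (hY : ContDiff ℝ 2 Y)
    (Z : ℝ → ℂ) (hZ : ContDiff ℝ 1 Z)
    (u1 u2 v w1 w2 : ℝ → ℝ → ℂ × ℂ)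
    (hu1 : u1 = reField (sepField a m₀ Y))
    (hu2 : u2 = imField (sepField a m₀ Y))
    (hv : v = sepField a (2 * m₀) Z)
    (hw1 : w1 = reField v)
    (hw2 : w2 = imField v) :
    trilinG a ε u1 u1 w1 = trilinG a ε u1 u2 w2 ∧
    trilinG a ε u1 u1 w2 = -trilinG a ε u1 u2 w1 ∧
    trilinG a ε u1 u1 v = Complex.I * trilinG a ε u1 u2 v := by
  subst hu1 hu2 hw1 hw2 hv
  exact double_wavenumber_interaction_identities_general ha.ne' ε
    (isZonal_sepField a m₀ Y) (contDiff_sepField a m₀ hY)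
    (isZonal_sepField a (2 * m₀) Z) (continuous_sepField a (2 * m₀) hZ)
    (by omega) (by omega)
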